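/- arXiv:1809.08544 — 9 statements merged into one kernel-verified Lean document; each statement's English description precedes it below -/
import Mathlib

section
/- Let φ₊ : [0,1] → ℝ be continuous with φ₊(0) = 1 and φ₊(y) ≥ 1/2 for all y ∈ [0,1]. Then lim_{y→0+} b(y)·φ₊(y)·((u'(0)² − b'(0)²)/b'(0))·∫₁^y dz/((u(z)² − b(z)²)·φ₊(z)²) = −1. (In particular the limiting profile b(y)Γ⁺(α,y) of the magnetic island extends continuously to y = 0 with value −1.) -/
open Filter Set Topology

lemma aux_tendsto (f : ℝ → ℝ) (L : ℝ) (hf : ContinuousOn f (Ioc 0 1))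
    (hL : Tendsto (fun z => z ^ 2 * f z) (𝓝[>] (0:ℝ)) (𝓝 L)) :
    Tendsto (fun y => y * ∫ z in (1:ℝ)..y, f z) (𝓝[>] (0:ℝ)) (𝓝 (-L)) := by
  have hint : ∀ a ∈ Ioc (0:ℝ) 1, ∀ c ∈ Ioc (0:ℝ) 1,
      IntervalIntegrable f MeasureTheory.volume a c := by
    intro a ha c hc
    apply ContinuousOn.intervalIntegrable
    apply hf.mono
    intro x hx
    exact (ordConnected_Ioc.uIcc_subset ha hc) hx
  rw [Metric.tendsto_nhds]
  intro ε hε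
  have h1 := (Metric.tendsto_nhds.1 hL) (ε / 2) (by positivity)
  obtain ⟨d, hd0, hd⟩ := (mem_nhdsGT_iff_exists_Ioo_subset).1 h1
  simp only [mem_Ioi] at hd0
  set δ := min (d / 2) 1 with hδ
  have hδ0 : 0 < δ := by positivity
  have hδ1 : δ ≤ 1 := min_le_right _ _
  have hδd : δ < d := lt_of_le_of_lt (min_le_left _ _) (by linarith)
  set C := (∫ z in (1:ℝ)..δ, f z) + L / δ with hC
  have h2 : Tendsto (fun y : ℝ => y * C) (𝓝[>] (0:ℝ)) (𝓝 0) := by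
    have : Tendsto (fun y : ℝ => y * C) (𝓝 0) (𝓝 (0 * C)) :=
      (continuous_id.mul continuous_const).tendsto 0
    rw [zero_mul] at this
    exact this.mono_left nhdsWithin_le_nhds
  have h3 := (Metric.tendsto_nhds.1 h2) (ε / 2) (by positivity)
  filter_upwards [h3, Ioo_mem_nhdsGT hδ0] with y hy3 hy
  obtain ⟨hy0, hyδ⟩ := hy
  have hIy : y ∈ Ioc (0:ℝ) 1 := ⟨hy0, by linarith⟩
  have hIδ : δ ∈ Ioc (0:ℝ) 1 := ⟨hδ0, hδ1⟩
  have hne : ∀ z ∈ Icc y δ, z ≠ 0 := fun z hz => (lt_of_lt_of_le hy0 hz.1).ne'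
  have hcont2 : ∀ K : ℝ, ContinuousOn (fun z : ℝ => K / z ^ 2) (Icc y δ) := fun K =>
    continuousOn_const.div (continuousOn_pow 2) (fun z hz => pow_ne_zero _ (hne z hz))
  have hi2 : ∀ K : ℝ, IntervalIntegrable (fun z : ℝ => K / z ^ 2) MeasureTheory.volume y δ := fun K =>
    ContinuousOn.intervalIntegrable (by rw [uIcc_of_le hyδ.le]; exact hcont2 K)
  have hev : ∀ K : ℝ, ∫ z in y..δ, K / z ^ 2 = K / y - K / δ := by
    intro K
    rw [intervalIntegral.integral_eq_sub_of_hasDerivAt (f := fun z => - (K / z)) _ (hi2 K)]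
    · ring
    · intro z hz
      rw [uIcc_of_le hyδ.le] at hz
      have := ((hasDerivAt_const z K).div (hasDerivAt_id z) (hne z hz)).neg
      refine HasDerivAt.congr_deriv (f := fun z => - (K / z)) this ?_
      simp [neg_div]
  have hb : ‖∫ z in y..δ, (f z - L / z ^ 2)‖ ≤ ∫ z in y..δ, (ε / 2) / z ^ 2 := by
    apply intervalIntegral.norm_integral_le_of_norm_le hyδ.le _ (hi2 _)
    refine Eventually.of_forall fun z hz => ?_
    have hz0 : 0 < z := lt_trans hy0 hz.1
    have := hd ⟨hz0, lt_of_le_of_lt hz.2 hδd⟩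
    simp only [mem_ofPred_eq, Real.dist_eq] at this
    have e : f z - L / z ^ 2 = (z ^ 2 * f z - L) / z ^ 2 := by field_simp
    rw [e, Real.norm_eq_abs, abs_div, abs_of_pos (pow_pos hz0 2)]
    gcongr
  rw [intervalIntegral.integral_sub (hint y hIy δ hIδ) (hi2 L), hev, hev] at hb
  have hsplit : (∫ z in (1:ℝ)..y, f z) = (∫ z in (1:ℝ)..δ, f z) - ∫ z in y..δ, f z := by
    have := intervalIntegral.integral_add_adjacent_intervals
      (hint 1 ⟨one_pos, le_rfl⟩ y hIy) (hint y hIy δ hIδ)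
    linarith
  set J := ∫ z in y..δ, f z
  rw [Real.dist_eq, sub_zero] at hy3
  rw [Real.dist_eq, hsplit]
  have e2 : y * ((∫ z in (1:ℝ)..δ, f z) - J) - -L = y * C - y * (J - (L / y - L / δ)) := by
    rw [hC]; field_simp; ring
  rw [e2]
  have h5 : |y * (J - (L / y - L / δ))| ≤ ε / 2 := by
    rw [abs_mul, abs_of_pos hy0]
    calc y * |J - (L / y - L / δ)| ≤ y * (ε / 2 / y - ε / 2 / δ) := by gcongr; exact hb
      _ ≤ y * (ε / 2 / y) := by
        gcongr; linarith [show 0 < ε / 2 / δ by positivity]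
      _ = ε / 2 := by field_simp
  calc _ ≤ |y * C| + |y * (J - (L / y - L / δ))| := abs_sub _ _
    _ < ε := by linarith

/-- Continuity of the limiting magnetic-island profile at `y = 0`: for any continuous
`φ₊` on `[0,1]` with `φ₊(0) = 1` and `φ₊ ≥ 1/2`, the profile
`b(y)·φ₊(y)·((u'(0)²−b'(0)²)/b'(0))·∫₁^y dz/((u²−b²)φ₊²)` tends to `−1` as `y → 0⁺`. -/
theorem island_profile_continuous_at_zero (u b : ℝ → ℝ)
    (hu : ContDiffOn ℝ 5 u (Icc (-1) 1)) (hb : ContDiffOn ℝ 5 b (Icc (-1) 1))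
    (hu0 : u 0 = 0) (hb0 : b 0 = 0)
    (hmono : ∃ c₀ > 0, ∀ y ∈ Icc (-1:ℝ) 1, c₀ ≤ deriv b y - |deriv u y|)
    (φp : ℝ → ℝ) (hφcont : ContinuousOn φp (Icc (0:ℝ) 1))
    (hφ0 : φp 0 = 1) (hφhalf : ∀ y ∈ Icc (0:ℝ) 1, 1/2 ≤ φp y) :
    Tendsto (fun y => b y * φp y * ((deriv u 0 ^ 2 - deriv b 0 ^ 2) / deriv b 0) *
        ∫ z in (1:ℝ)..y, 1 / ((u z ^ 2 - b z ^ 2) * φp z ^ 2))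
      (𝓝[>] (0:ℝ)) (𝓝 (-1)) := by
  obtain ⟨c, hc, hm⟩ := hmono
  have hdiff : ∀ g : ℝ → ℝ, ContDiffOn ℝ 5 g (Icc (-1) 1) → ∀ x ∈ Ioo (-1:ℝ) 1,
      DifferentiableAt ℝ g x := fun g hg x hx =>
    (hg.contDiffAt (Icc_mem_nhds hx.1 hx.2)).differentiableAt (by norm_num)
  have hsub : Icc (0:ℝ) 1 ⊆ Icc (-1) 1 := Icc_subset_Icc (by norm_num) le_rfl
  have hcu : ContinuousOn u (Icc 0 1) := hu.continuousOn.mono hsub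
  have hcb : ContinuousOn b (Icc 0 1) := hb.continuousOn.mono hsub
  have hm1 : StrictMonoOn (b - u) (Icc 0 1) := by
    apply strictMonoOn_of_deriv_pos (convex_Icc 0 1) (hcb.sub hcu)
    intro x hx
    rw [interior_Icc] at hx
    have hx' : x ∈ Ioo (-1:ℝ) 1 := ⟨by linarith [hx.1], hx.2⟩
    rw [deriv_sub (hdiff b hb x hx') (hdiff u hu x hx')]
    linarith [hm x ⟨hx'.1.le, hx'.2.le⟩, le_abs_self (deriv u x)]
  have hm2 : StrictMonoOn (b + u) (Icc 0 1) := by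
    apply strictMonoOn_of_deriv_pos (convex_Icc 0 1) (hcb.add hcu)
    intro x hx
    rw [interior_Icc] at hx
    have hx' : x ∈ Ioo (-1:ℝ) 1 := ⟨by linarith [hx.1], hx.2⟩
    rw [deriv_add (hdiff b hb x hx') (hdiff u hu x hx')]
    linarith [hm x ⟨hx'.1.le, hx'.2.le⟩, neg_abs_le (deriv u x)]
  have hneg : ∀ z ∈ Ioc (0:ℝ) 1, u z ^ 2 - b z ^ 2 < 0 := by
    intro z hz
    have a1 := hm1 ⟨le_rfl, zero_le_one⟩ ⟨hz.1.le, hz.2⟩ hz.1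
    have a2 := hm2 ⟨le_rfl, zero_le_one⟩ ⟨hz.1.le, hz.2⟩ hz.1
    simp only [Pi.sub_apply, Pi.add_apply, hu0, hb0, sub_zero, add_zero] at a1 a2
    nlinarith [mul_pos a1 a2]
  have hs : ∀ g : ℝ → ℝ, ContDiffOn ℝ 5 g (Icc (-1) 1) → g 0 = 0 →
      Tendsto (fun z => g z / z) (𝓝[>] (0:ℝ)) (𝓝 (deriv g 0)) := by
    intro g hg h0
    have := (hasDerivAt_iff_tendsto_slope.1 (hdiff g hg 0 (by norm_num)).hasDerivAt).mono_left
      (nhdsWithin_mono (0:ℝ) (fun x (hx : 0 < x) => hx.ne'))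
    refine this.congr fun z => ?_
    simp [slope_def_field, h0]
  have hφt : Tendsto φp (𝓝[>] (0:ℝ)) (𝓝 1) := by
    have := (hφcont 0 ⟨le_rfl, zero_le_one⟩).tendsto
    rw [hφ0] at this
    refine this.mono_left ?_
    rw [← nhdsWithin_Ioc_eq_nhdsGT (zero_lt_one' ℝ)]
    exact nhdsWithin_mono _ Ioc_subset_Icc_self
  have hm0 := hm 0 (by norm_num)
  have hb'pos : 0 < deriv b 0 := by linarith [abs_nonneg (deriv u 0)]
  have hD : deriv u 0 ^ 2 - deriv b 0 ^ 2 ≠ 0 := by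
    have : |deriv u 0| < |deriv b 0| := by rw [abs_of_pos hb'pos]; linarith
    exact (sub_neg.2 (sq_lt_sq.2 this)).ne
  have key := aux_tendsto (fun z => 1 / ((u z ^ 2 - b z ^ 2) * φp z ^ 2))
    (1 / ((deriv u 0 ^ 2 - deriv b 0 ^ 2) * 1 ^ 2)) ?_ ?_
  · have := (((hs b hb hb0).mul hφt).mul
      (tendsto_const_nhds (x := (deriv u 0 ^ 2 - deriv b 0 ^ 2) / deriv b 0))).mul key
    have e : deriv b 0 * 1 * ((deriv u 0 ^ 2 - deriv b 0 ^ 2) / deriv b 0) *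
      -(1 / ((deriv u 0 ^ 2 - deriv b 0 ^ 2) * 1 ^ 2)) = -1 := by
      field_simp
    rw [e] at this
    refine this.congr' ?_
    filter_upwards [self_mem_nhdsWithin] with y hy
    have hy0 : y ≠ 0 := (show 0 < y from hy).ne'
    have hb' := hb'pos.ne'
    field_simp
  · have h1 := hcu.mono (Ioc_subset_Icc_self)
    have h2 := hcb.mono (Ioc_subset_Icc_self)
    have h3 := hφcont.mono (Ioc_subset_Icc_self)
    refine continuousOn_const.div (((h1.pow 2).sub (h2.pow 2)).mul (h3.pow 2)) ?_
    intro z hz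
    have := hφhalf z ⟨hz.1.le, hz.2⟩
    exact mul_ne_zero (hneg z hz).ne (pow_ne_zero _ (by linarith))
  · have := (tendsto_const_nhds (x := (1:ℝ))).div
      (((((hs u hu hu0).pow 2).sub ((hs b hb hb0).pow 2))).mul (hφt.pow 2))
      (mul_ne_zero hD (by norm_num))
    refine this.congr' ?_
    filter_upwards [self_mem_nhdsWithin] with y hy
    have hy0 : y ≠ 0 := (show 0 < y from hy).ne'
    simp only [Pi.div_apply]
    rw [div_pow, div_pow, ← sub_div, div_mul_eq_mul_div, one_div_div, mul_one_div]
end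

section
/- Let k, k₀ ∈ ℝ with k₀ > |k| ≥ 0, let u(y) = k·y and b(y) = k₀·y, and let α be a nonzero real number. Define φ₊ : [0,1] → ℝ by φ₊(0) = 1 and φ₊(y) = sinh(αy)/(αy) for y ∈ (0,1]. Then: (i) φ₊ is continuous on [0,1], continuously differentiable with ∂_yφ₊(0) = 0, φ₊(y) ≥ 1, and y ↦ (u(y)² − b(y)²)·∂_yφ₊(y) is differentiable on [0,1] with derivative α²(u(y)² − b(y)²)φ₊(y); (ii) for every y ∈ (0,1], b(y)·φ₊(y)·((u'(0)² − b'(0)²)/b'(0))·∫₁^y dz/((u(z)² − b(z)²)·φ₊(z)²) = −sinh(α(1−y))/sinh(α). In particular the limiting magnetic-island profile b·Γ⁺ satisfies (∂_y² − α²)(bΓ⁺) = 0 with bΓ⁺(0) = −1 and bΓ⁺(1) = 0. -/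
open Filter Set Topology

/-- The explicit regular solution of the homogeneous Sturmian equation for the linear
profiles `u(y) = ky`, `b(y) = k₀y`: `φ₊(y) = sinh(αy)/(αy)` (with value `1` at `y = 0`). -/
noncomputable def phiPlusLinear (α : ℝ) (y : ℝ) : ℝ :=
  if y = 0 then 1 else Real.sinh (α * y) / (α * y)


theorem phi_mul (α : ℝ) (hα : α ≠ 0) (y : ℝ) :
    y * phiPlusLinear α y = Real.sinh (α * y) / α := by
  unfold phiPlusLinear
  split_ifs with h
  · simp [h]
  · field_simp

theorem phi_eq_dslope (α : ℝ) (hα : α ≠ 0) :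
    phiPlusLinear α = dslope (fun y => Real.sinh (α * y) / α) 0 := by
  funext y
  by_cases h : y = 0
  · subst h
    rw [dslope_same]
    have h1 : HasDerivAt (fun y => Real.sinh (α * y) / α) 
        (Real.cosh (α * 0) * (α * 1) / α) 0 :=
      (((hasDerivAt_id (0:ℝ)).const_mul α).sinh).div_const α
    rw [h1.deriv]
    simp [phiPlusLinear, hα]
  · rw [dslope_of_ne _ h, slope_def_field]
    simp only [phiPlusLinear, h, if_false]
    simp
    field_simp

theorem phi_analytic (α : ℝ) (hα : α ≠ 0) (y : ℝ) : AnalyticAt ℝ (phiPlusLinear α) y := by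
  have hg : ∀ z, AnalyticAt ℝ (fun y => Real.sinh (α * y) / α) z := by
    intro z
    have : AnalyticAt ℝ Real.sinh (α * z) := by fun_prop
    fun_prop
  by_cases h : y = 0
  · subst h
    rw [phi_eq_dslope α hα]
    obtain ⟨p, hp⟩ := hg 0
    exact ⟨_, hp.has_fpower_series_dslope_fslope⟩
  · have h1 : AnalyticAt ℝ (fun y => Real.sinh (α * y) / α / y) y :=
      (hg y).div analyticAt_id h
    refine h1.congr ?_
    filter_upwards [isOpen_ne.mem_nhds h] with z hz
    have hz' : z ≠ 0 := hz
    rw [← phi_mul α hα z]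
    field_simp

theorem phi_deriv (α : ℝ) (hα : α ≠ 0) (y : ℝ) :
    y ^ 2 * deriv (phiPlusLinear α) y = y * Real.cosh (α * y) - Real.sinh (α * y) / α := by
  have h1 : HasDerivAt (fun y => Real.sinh (α * y) / α)
      (Real.cosh (α * y) * (α * 1) / α) y :=
    (((hasDerivAt_id y).const_mul α).sinh).div_const α
  have h2 : HasDerivAt (fun y => y * phiPlusLinear α y)
      (1 * phiPlusLinear α y + y * deriv (phiPlusLinear α) y) y :=
    (hasDerivAt_id y).mul (phi_analytic α hα y).differentiableAt.hasDerivAt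
  have h3 : (fun y => y * phiPlusLinear α y) = fun y => Real.sinh (α * y) / α :=
    funext (phi_mul α hα)
  rw [h3] at h2
  have h4 := h2.unique h1
  have h5 : Real.cosh (α * y) * (α * 1) / α = Real.cosh (α * y) := by field_simp
  rw [h5] at h4
  rw [← phi_mul α hα y, ← h4]
  ring

theorem phi_ge (α : ℝ) (hα : α ≠ 0) (y : ℝ) : 1 ≤ phiPlusLinear α y := by
  unfold phiPlusLinear
  split_ifs with h
  · exact le_rfl
  · rcases lt_or_gt_of_ne (mul_ne_zero hα h) with h1 | h1
    · rw [le_div_iff_of_neg h1, one_mul]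
      exact Real.sinh_le_self_iff.2 h1.le
    · rw [le_div_iff₀ h1, one_mul]
      exact Real.self_le_sinh_iff.2 h1.le

theorem phi_deriv_zero (α : ℝ) : deriv (phiPlusLinear α) 0 = 0 := by
  have h : (fun y => phiPlusLinear α (-y)) = phiPlusLinear α := by
    funext y
    simp [phiPlusLinear]
  have h1 := deriv_comp_neg (phiPlusLinear α) 0
  rw [h, neg_zero] at h1
  linarith

/-- For linear profiles `u(y) = ky`, `b(y) = k₀y` with `k₀ > |k| ≥ 0` the limiting
magnetic-island profile is explicit: `φ₊(y) = sinh(αy)/(αy)` is a regular solution of the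
homogeneous Sturmian equation, and
`b(y)Γ⁺(y) = b(y)·φ₊(y)·((u'(0)²−b'(0)²)/b'(0))·∫₁^y dz/((u²−b²)φ₊²)
           = −sinh(α(1−y))/sinh α` for `y ∈ (0,1]`. -/
theorem island_profile_linear_case (k k₀ α : ℝ) (hk : |k| < k₀) (hα : α ≠ 0) :
    ContinuousOn (phiPlusLinear α) (Icc (0:ℝ) 1) ∧
    (∀ y ∈ Icc (0:ℝ) 1, DifferentiableAt ℝ (phiPlusLinear α) y) ∧
    ContinuousOn (deriv (phiPlusLinear α)) (Icc (0:ℝ) 1) ∧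
    deriv (phiPlusLinear α) 0 = 0 ∧
    (∀ y ∈ Icc (0:ℝ) 1, 1 ≤ phiPlusLinear α y) ∧
    (∀ y ∈ Icc (0:ℝ) 1,
      HasDerivAt (fun z => ((k * z) ^ 2 - (k₀ * z) ^ 2) * deriv (phiPlusLinear α) z)
        (α ^ 2 * ((k * y) ^ 2 - (k₀ * y) ^ 2) * phiPlusLinear α y) y) ∧
    (∀ y ∈ Ioc (0:ℝ) 1,
      (k₀ * y) * phiPlusLinear α y * ((k ^ 2 - k₀ ^ 2) / k₀) *
          (∫ z in (1:ℝ)..y, 1 / (((k * z) ^ 2 - (k₀ * z) ^ 2) * (phiPlusLinear α z) ^ 2))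
        = -(Real.sinh (α * (1 - y)) / Real.sinh α)) := by
  have hk0 : 0 < k₀ := lt_of_le_of_lt (abs_nonneg k) hk
  have hC : k ^ 2 - k₀ ^ 2 ≠ 0 := by
    have := sq_lt_sq' (by linarith [neg_abs_le k]) (lt_of_le_of_lt (le_abs_self k) hk)
    linarith
  refine ⟨fun y _ => (phi_analytic α hα y).continuousAt.continuousWithinAt,
    fun y _ => (phi_analytic α hα y).differentiableAt,
    fun y _ => (phi_analytic α hα y).deriv.continuousAt.continuousWithinAt,
    phi_deriv_zero α, fun y _ => phi_ge α hα y, ?_, ?_⟩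
  · intro y _
    have e : (fun z => ((k * z) ^ 2 - (k₀ * z) ^ 2) * deriv (phiPlusLinear α) z) =
        fun z => (k ^ 2 - k₀ ^ 2) * (z * Real.cosh (α * z) - Real.sinh (α * z) / α) := by
      funext z
      rw [← phi_deriv α hα z]
      ring
    rw [e]
    have hl : HasDerivAt (fun z : ℝ => α * z) (α * 1) y := (hasDerivAt_id y).const_mul α
    have h1 := (((hasDerivAt_id y).mul hl.cosh).sub (hl.sinh.div_const α)).const_mul
      (k ^ 2 - k₀ ^ 2)
    refine h1.congr_deriv ?_
    have h2 : α ^ 2 * ((k * y) ^ 2 - (k₀ * y) ^ 2) * phiPlusLinear α y =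
      α ^ 2 * (k ^ 2 - k₀ ^ 2) * y * (y * phiPlusLinear α y) := by ring
    rw [h2, phi_mul α hα y]
    simp only [id]
    field_simp
    ring
  · intro y hy
    have hs : ∀ z ∈ uIcc (1:ℝ) y, Real.sinh (α * z) ≠ 0 := by
      intro z hz
      rw [uIcc_of_ge hy.2] at hz
      have : z ≠ 0 := (lt_of_lt_of_le hy.1 hz.1).ne'
      simpa [Real.sinh_eq_zero] using And.intro hα this
    have e : ∀ z, 1 / (((k * z) ^ 2 - (k₀ * z) ^ 2) * (phiPlusLinear α z) ^ 2) =
        1 / ((k ^ 2 - k₀ ^ 2) * (Real.sinh (α * z) / α) ^ 2) := by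
      intro z
      rw [← phi_mul α hα z]
      ring_nf
    have hI : (∫ z in (1:ℝ)..y, 1 / (((k * z) ^ 2 - (k₀ * z) ^ 2) * (phiPlusLinear α z) ^ 2))
        = -α / (k ^ 2 - k₀ ^ 2) * (Real.cosh (α * y) / Real.sinh (α * y))
          - -α / (k ^ 2 - k₀ ^ 2) * (Real.cosh (α * 1) / Real.sinh (α * 1)) := by
      simp_rw [e]
      refine intervalIntegral.integral_eq_sub_of_hasDerivAt
        (f := fun z => -α / (k ^ 2 - k₀ ^ 2) * (Real.cosh (α * z) / Real.sinh (α * z))) ?_ ?_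
      · intro z hz
        have hz' := hs z hz
        have hl : HasDerivAt (fun z : ℝ => α * z) (α * 1) z := (hasDerivAt_id z).const_mul α
        refine ((hl.cosh.div hl.sinh hz').const_mul (-α / (k ^ 2 - k₀ ^ 2))).congr_deriv ?_
        have := Real.cosh_sq (α * z)
        field_simp
        rw [this]
        ring
      · apply ContinuousOn.intervalIntegrable
        refine ContinuousOn.div continuousOn_const (by fun_prop) ?_
        intro z hz
        exact mul_ne_zero hC (pow_ne_zero _ (div_ne_zero (hs z hz) hα))
    have h1 := hs 1 left_mem_uIcc
    have h2 := hs y right_mem_uIcc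
    rw [hI, mul_assoc k₀, phi_mul α hα y, mul_sub α, mul_one, Real.sinh_sub]
    rw [mul_one] at h1
    field_simp
    ring
end

section
/- Let k ≥ 1 be a natural number, let a < b < d be real numbers, let f : ℝ → ℝ be k-times continuously differentiable on [a,b] with positive (one-sided) derivative at b (derivWithin f [a,b] b > 0), and let M > f(b). Then there exists F : ℝ → ℝ which is k-times continuously differentiable on [a,d], satisfies F(x) = f(x) for all x ∈ [a,b], has F'(x) > 0 for all x ∈ [b,d], and F(d) = M. -/
open Set

theorem aux_prim (n : ℕ) (a b : ℝ) (hab : a < b) (f w : ℝ → ℝ)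
    (hf : ContDiffOn ℝ (n + 1 : ℕ) f (Icc a b)) (hw : ContDiff ℝ n w)
    (h : ∀ x ∈ Icc a b, w x = derivWithin f (Icc a b) x) :
    ContDiff ℝ (n + 1 : ℕ) (fun x => f a + ∫ t in a..x, w t) ∧
    (∀ x, HasDerivAt (fun x => f a + ∫ t in a..x, w t) (w x) x) ∧
    (∀ x ∈ Icc a b, f a + ∫ t in a..x, w t = f x) := by
  have hd : ∀ x, HasDerivAt (fun x => f a + ∫ t in a..x, w t) (w x) x := fun x =>
    (hw.continuous.integral_hasStrictDerivAt a x).hasDerivAt.const_add _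
  refine ⟨?_, hd, ?_⟩
  · have : ((n + 1 : ℕ) : WithTop ℕ∞) = (n : WithTop ℕ∞) + 1 := by push_cast; rfl
    rw [this, contDiff_succ_iff_deriv]
    refine ⟨fun x => (hd x).differentiableAt, by simp, ?_⟩
    have : deriv (fun x => f a + ∫ t in a..x, w t) = w := funext fun x => (hd x).deriv
    rwa [this]
  · apply eq_of_derivWithin_eq (f := fun x => f a + ∫ t in a..x, w t)
    · exact fun x _ => (hd x).differentiableAt.differentiableWithinAt
    · exact hf.differentiableOn (by simp)
    · intro x hx
      have hx' : x ∈ Icc a b := ⟨hx.1, hx.2.le⟩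
      rw [(hd x).hasDerivWithinAt.derivWithin (uniqueDiffOn_Icc hab x hx'), h x hx']
    · simp

theorem aux_deriv (n : ℕ) (a b : ℝ) (hab : a < b) (f : ℝ → ℝ)
    (hf : ContDiffOn ℝ (n + 1 : ℕ) f (Icc a b)) :
    ContDiffOn ℝ n (derivWithin f (Icc a b)) (Icc a b) :=
  hf.derivWithin (uniqueDiffOn_Icc hab) (by push_cast; rfl)

theorem aux_ext (n : ℕ) (a b : ℝ) (hab : a < b) : ∀ f : ℝ → ℝ,
    ContDiffOn ℝ n f (Icc a b) → ∃ w, ContDiff ℝ n w ∧ ∀ x ∈ Icc a b, w x = f x := by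
  induction n with
  | zero =>
    intro f hf
    refine ⟨IccExtend hab.le ((Icc a b).domRestrict f), ?_, fun x hx => ?_⟩
    · have h0 := hf.continuousOn.domRestrict.Icc_extend' (h := hab.le)
      exact contDiff_zero.2 h0
    · rw [IccExtend_of_mem _ _ hx]; rfl
  | succ n ih =>
    intro f hf
    obtain ⟨w, hw, h⟩ := ih _ (aux_deriv n a b hab f hf)
    obtain ⟨h1, -, h3⟩ := aux_prim n a b hab f w hf hw h
    exact ⟨_, h1, h3⟩

theorem ck_monotone_extension (k : ℕ) (hk : 1 ≤ k) (a b d : ℝ) (hab : a < b) (hbd : b < d)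
    (f : ℝ → ℝ) (M : ℝ)
    (hf : ContDiffOn ℝ k f (Icc a b))
    (hf' : 0 < derivWithin f (Icc a b) b)
    (hM : f b < M) :
    ∃ F : ℝ → ℝ, ContDiffOn ℝ k F (Icc a d) ∧
      (∀ x ∈ Icc a b, F x = f x) ∧
      (∀ x ∈ Icc b d, 0 < derivWithin F (Icc a d) x) ∧
      F d = M := by
  obtain ⟨n, rfl⟩ : ∃ n, k = n + 1 := ⟨k - 1, by omega⟩
  obtain ⟨w, hw, hwf⟩ := aux_ext n a b hab _ (aux_deriv n a b hab f hf)
  have hbm : b ∈ Icc a b := ⟨hab.le, le_rfl⟩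
  rw [← hwf b hbm] at hf'
  have hwc := hw.continuous
  obtain ⟨e, he, hball⟩ : ∃ e > 0, ∀ x, |x - b| < e → 0 < w x ∧ w x < w b + 1 := by
    have : ∀ᶠ x in nhds b, 0 < w x ∧ w x < w b + 1 :=
      (hwc.continuousAt.eventually_const_lt hf').and
        (hwc.continuousAt.eventually_lt_const (by linarith))
    obtain ⟨e, he, h⟩ := Metric.eventually_nhds_iff.1 this
    exact ⟨e, he, fun x hx => h (by simpa [Real.dist_eq] using hx)⟩
  obtain ⟨δ, hδ, hδe, hδd, hδM⟩ : ∃ δ > 0, δ < e ∧ δ < d - b ∧ (w b + 1) * δ < M - f b := by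
    have h3 : 0 < (M - f b) / (w b + 1) := div_pos (by linarith) (by linarith)
    obtain ⟨δ, h0, h1⟩ := exists_between (lt_min he (lt_min (sub_pos.2 hbd) h3))
    rw [lt_min_iff, lt_min_iff, lt_div_iff₀ (by linarith)] at h1
    exact ⟨δ, h0, h1.1, h1.2.1, by linarith [h1.2.2]⟩
  set χ : ℝ → ℝ := fun x => Real.smoothTransition (1 - (x - b) / δ) with hχ
  have χs : ContDiff ℝ n χ := by
    apply Real.smoothTransition.contDiff.comp
    fun_prop
  have χc := χs.continuous
  have χ0 : ∀ x, 0 ≤ χ x := fun x => Real.smoothTransition.nonneg _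
  have χ1 : ∀ x, χ x ≤ 1 := fun x => Real.smoothTransition.le_one _
  have χl : ∀ x ≤ b, χ x = 1 := fun x hx => Real.smoothTransition.one_of_one_le (by
    have : (x - b) / δ ≤ 0 := div_nonpos_of_nonpos_of_nonneg (by linarith) hδ.le
    linarith)
  have χr : ∀ x, b + δ ≤ x → χ x = 0 := fun x hx => Real.smoothTransition.zero_of_nonpos (by
    have : 1 ≤ (x - b) / δ := (one_le_div hδ).2 (by linarith)
    linarith)
  have χlt : ∀ x, b < x → χ x < 1 := fun x hx => Real.smoothTransition.lt_one_of_lt_one (by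
    have : 0 < (x - b) / δ := div_pos (by linarith) hδ
    linarith)
  have hI1 : ∫ x in b..d, χ x * w x < M - f b := by
    have hint : ∀ p q, IntervalIntegrable (fun x => χ x * w x) MeasureTheory.volume p q :=
      fun p q => (χc.mul hwc).intervalIntegrable p q
    rw [← intervalIntegral.integral_add_adjacent_intervals (hint b (b + δ)) (hint (b + δ) d)]
    have e2 : ∫ x in (b + δ)..d, χ x * w x = 0 := by
      rw [intervalIntegral.integral_congr (g := fun _ => (0 : ℝ))]
      · simp
      · intro x hx
        rw [uIcc_of_le (by linarith)] at hx
        simp [χr x hx.1]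
    have e1 : ∫ x in b..(b + δ), χ x * w x ≤ ∫ x in b..(b + δ), (w b + 1) := by
      apply intervalIntegral.integral_mono_on (by linarith) (hint _ _) (by simp)
      intro x hx
      obtain ⟨h1, h2⟩ := hball x (by rw [abs_lt]; constructor <;> linarith [hx.1, hx.2])
      nlinarith [χ0 x, χ1 x]
    rw [intervalIntegral.integral_const, smul_eq_mul] at e1
    rw [e2]
    nlinarith
  have hI2 : 0 < ∫ x in b..d, (1 - χ x) := by
    apply intervalIntegral.intervalIntegral_pos_of_pos_on
    · exact (continuous_const.sub χc).intervalIntegrable _ _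
    · intro x hx
      linarith [χlt x hx.1]
    · exact hbd
  set c := (M - f b - ∫ x in b..d, χ x * w x) / ∫ x in b..d, (1 - χ x) with hc
  have hc0 : 0 < c := div_pos (by linarith) hI2
  set G : ℝ → ℝ := fun x => χ x * w x + c * (1 - χ x) with hG
  have Gs : ContDiff ℝ n G := (χs.mul hw).add (contDiff_const.mul (contDiff_const.sub χs))
  have Gf : ∀ x ∈ Icc a b, G x = derivWithin f (Icc a b) x := fun x hx => by
    simp [hG, χl x hx.2, hwf x hx]
  have Gpos : ∀ x ∈ Icc b d, 0 < G x := by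
    intro x hx
    rcases le_total (b + δ) x with h | h
    · simpa [hG, χr x h] using hc0
    · obtain ⟨h1, -⟩ := hball x (by rw [abs_lt]; constructor <;> linarith [hx.1, hx.2])
      rcases (χ0 x).eq_or_lt with h0 | h0
      · simpa [hG, ← h0] using hc0
      · have := mul_pos h0 h1
        have := mul_nonneg hc0.le (sub_nonneg.2 (χ1 x))
        simp only [hG]; linarith
  have GI : ∫ x in b..d, G x = M - f b := by
    simp only [hG]
    have i1 : IntervalIntegrable (fun x => χ x * w x) MeasureTheory.volume b d :=
      (χc.mul hwc).intervalIntegrable _ _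
    have i2 : IntervalIntegrable (fun x => c * (1 - χ x)) MeasureTheory.volume b d :=
      (continuous_const.mul (continuous_const.sub χc)).intervalIntegrable _ _
    rw [intervalIntegral.integral_add i1 i2,
      intervalIntegral.integral_const_mul, hc, div_mul_cancel₀ _ hI2.ne']
    ring
  obtain ⟨h1, h2, h3⟩ := aux_prim n a b hab f G hf Gs Gf
  refine ⟨_, h1.contDiffOn, h3, fun x hx => ?_, ?_⟩
  · rw [(h2 x).hasDerivWithinAt.derivWithin
      (uniqueDiffOn_Icc (hab.trans hbd) x ⟨hab.le.trans hx.1, hx.2⟩)]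
    exact Gpos x hx
  · have := h3 b hbm
    have h4 := intervalIntegral.integral_add_adjacent_intervals
      (Gs.continuous.intervalIntegrable (μ := MeasureTheory.volume) a b)
      (Gs.continuous.intervalIntegrable (μ := MeasureTheory.volume) b d)
    show f a + ∫ t in a..d, G t = M
    linarith
end

section
/- Let u, b : ℝ → ℝ be continuous on [−1,1] with |u(y)| ≤ |b(y)| for all y ∈ [−1,1] (Stern stability condition), let α ∈ ℝ, and let c ∈ ℂ with Im c ≠ 0. Set H(y) := (u(y) + b(y) − c)(u(y) − b(y) − c). If Ψ : ℝ → ℂ is continuously differentiable on [−1,1], the function y ↦ H(y)·Ψ'(y) is differentiable on [−1,1] with (HΨ')'(y) = α²H(y)Ψ(y) for all y ∈ [−1,1], and Ψ(−1) = Ψ(1) = 0, then Ψ(y) = 0 for all y ∈ [−1,1]. -/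
open Set

/-- Stern stability: under `|u| ≤ |b|` on `[−1,1]`, the Sturmian boundary value problem
`∂_y(ℋ ∂_yΨ) − α²ℋΨ = 0`, `Ψ(±1) = 0`, with `ℋ(y) = (u+b−c)(u−b−c)` and nonreal
spectral parameter `c`, has only the trivial solution. -/
theorem stern_stability (u b : ℝ → ℝ)
    (hu : ContinuousOn u (Icc (-1:ℝ) 1)) (hb : ContinuousOn b (Icc (-1:ℝ) 1))
    (hss : ∀ y ∈ Icc (-1:ℝ) 1, |u y| ≤ |b y|)
    (α : ℝ) (c : ℂ) (hc : c.im ≠ 0)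
    (Ψ : ℝ → ℂ)
    (hΨdiff : ∀ y ∈ Icc (-1:ℝ) 1, DifferentiableAt ℝ Ψ y)
    (hΨ'cont : ContinuousOn (deriv Ψ) (Icc (-1:ℝ) 1))
    (hode : ∀ y ∈ Icc (-1:ℝ) 1,
      HasDerivAt
        (fun z => (((u z + b z : ℝ) : ℂ) - c) * (((u z - b z : ℝ) : ℂ) - c) * deriv Ψ z)
        ((α : ℂ) ^ 2 * ((((u y + b y : ℝ) : ℂ) - c) * (((u y - b y : ℝ) : ℂ) - c)) * Ψ y) y)
    (hbc₁ : Ψ (-1) = 0) (hbc₂ : Ψ 1 = 0) :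
    ∀ y ∈ Icc (-1:ℝ) 1, Ψ y = 0 := by
  set K : ℝ → ℂ := fun z =>
    (((u z + b z : ℝ) : ℂ) - c) * (((u z - b z : ℝ) : ℂ) - c) with hK
  set w : ℂ := ⟨1, c.re / c.im⟩ with hw
  set F : ℝ → ℝ := fun z =>
    (w * ((K z * deriv Ψ z) * (starRingEnd ℂ) (Ψ z))).re with hF
  set D : ℝ → ℝ := fun y => ((u y) ^ 2 - (b y) ^ 2 - (c.re ^ 2 + c.im ^ 2)) *
    (Complex.normSq (deriv Ψ y) + α ^ 2 * Complex.normSq (Ψ y)) with hD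
  have hwK : ∀ y, (w * K y).re = (u y) ^ 2 - (b y) ^ 2 - (c.re ^ 2 + c.im ^ 2) := by
    intro y
    simp [hw, hK, Complex.mul_re, Complex.mul_im]
    field_simp
    ring
  have hder : ∀ y ∈ Icc (-1:ℝ) 1, HasDerivAt F (D y) y := by
    intro y hy
    have h1 : HasDerivAt (fun z => K z * deriv Ψ z) ((α : ℂ) ^ 2 * K y * Ψ y) y := hode y hy
    have h2 : HasDerivAt (fun z => (starRingEnd ℂ) (Ψ z)) ((starRingEnd ℂ) (deriv Ψ y)) y :=
      (hΨdiff y hy).hasDerivAt.star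
    have h3 := (h1.mul h2).const_mul w
    have h4 := Complex.reCLM.hasFDerivAt.comp_hasDerivAt y h3
    refine h4.congr_deriv ?_
    have e : w * ((α : ℂ) ^ 2 * K y * Ψ y * (starRingEnd ℂ) (Ψ y) +
        K y * deriv Ψ y * (starRingEnd ℂ) (deriv Ψ y)) =
        (w * K y) * ((Complex.normSq (deriv Ψ y) + α ^ 2 * Complex.normSq (Ψ y) : ℝ) : ℂ) := by
      push_cast
      rw [← Complex.mul_conj, ← Complex.mul_conj]
      ring
    rw [Complex.reCLM_apply, e, Complex.re_mul_ofReal, hwK]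
  have hcpos : 0 < c.re ^ 2 + c.im ^ 2 := by positivity
  have hbd : ∀ y ∈ Icc (-1:ℝ) 1, (u y) ^ 2 - (b y) ^ 2 ≤ 0 := fun y hy =>
    sub_nonpos.2 (sq_le_sq.2 (hss y hy))
  have hG : ∀ y, 0 ≤ Complex.normSq (deriv Ψ y) + α ^ 2 * Complex.normSq (Ψ y) := fun y =>
    add_nonneg (Complex.normSq_nonneg _) (mul_nonneg (sq_nonneg _) (Complex.normSq_nonneg _))
  have hanti : AntitoneOn F (Icc (-1:ℝ) 1) := by
    apply antitoneOn_of_deriv_nonpos (convex_Icc _ _)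
    · exact fun y hy => (hder y hy).continuousAt.continuousWithinAt
    · exact fun y hy => (hder y (interior_subset hy)).differentiableAt.differentiableWithinAt
    · intro y hy
      rw [(hder y (interior_subset hy)).deriv]
      exact mul_nonpos_of_nonpos_of_nonneg
        (by linarith [hbd y (interior_subset hy)]) (hG y)
  have hl : (-1:ℝ) ∈ Icc (-1:ℝ) 1 := by norm_num
  have hr : (1:ℝ) ∈ Icc (-1:ℝ) 1 := by norm_num
  have hF1 : F (-1) = 0 := by simp [hF, hbc₁]
  have hF2 : F 1 = 0 := by simp [hF, hbc₂]
  have hF0 : ∀ y ∈ Icc (-1:ℝ) 1, F y = 0 := fun y hy =>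
    le_antisymm (hF1 ▸ hanti hl hy hy.1) (hF2 ▸ hanti hy hr hy.2)
  have hd0 : ∀ y ∈ Icc (-1:ℝ) 1, deriv Ψ y = 0 := by
    intro y hy
    have hu' : UniqueDiffWithinAt ℝ (Icc (-1:ℝ) 1) y := uniqueDiffOn_Icc (by norm_num) y hy
    have h0 : HasDerivWithinAt F 0 (Icc (-1:ℝ) 1) y :=
      (hasDerivWithinAt_const y _ (0:ℝ)).congr hF0 (hF0 y hy)
    have hD0 : D y = 0 := hu'.eq_deriv _ (hder y hy).hasDerivWithinAt h0
    rcases mul_eq_zero.1 hD0 with h | h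
    · linarith [hbd y hy]
    · have h5 := Complex.normSq_nonneg (deriv Ψ y)
      have h6 := mul_nonneg (sq_nonneg α) (Complex.normSq_nonneg (Ψ y))
      exact Complex.normSq_eq_zero.1 (by linarith)
  intro y hy
  rw [← hbc₁]
  refine constant_of_has_deriv_right_zero
    (fun y hy => (hΨdiff y hy).continuousAt.continuousWithinAt) (fun x hx => ?_) y hy
  have hx' := Ico_subset_Icc_self hx
  have := (hΨdiff x hx').hasDerivAt
  rw [hd0 x hx'] at this
  exact this.hasDerivWithinAt
end

section
/- Suppose in addition that W₊ and W₋ are twice continuously differentiable on [a₋,a₊]. For c ∈ D₀ write σ₊(c) := W₊'(y_{c+})·(W₋(y_{c+}) − c) − W₋'(y_{c+})·(W₊(y_{c+}) − c) and σ₋(c) := W₊'(y_{c−})·(W₋(y_{c−}) − c) − W₋'(y_{c−})·(W₊(y_{c−}) − c) (these are real numbers). Then there exists a constant C > 0 such that |σ₊(c) − σ₋(c)| ≤ C·|c|·|σ₋(c)| for all c ∈ D₀; equivalently, |σ₊(c)/σ₋(c) − 1| ≤ C|c| for c ≠ 0. -/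
open Set

lemma mv_aux (am ap : ℝ) (ham : am < 0) (hap : 0 < ap) (F F' : ℝ → ℝ)
    (hF : ∀ y ∈ Icc am ap, HasDerivAt F (F' y) y) (y : ℝ) (hy : y ∈ Icc am ap) :
    ∃ ξ ∈ Icc am ap, |ξ| ≤ |y| ∧ F y - F 0 = F' ξ * y := by
  obtain ⟨h1, h2⟩ := hy
  rcases lt_trichotomy y 0 with h | h | h
  · obtain ⟨ξ, hξ, e⟩ := exists_hasDerivAt_eq_slope F F' h
      (fun x hx => (hF x ⟨by linarith [hx.1], by linarith [hx.2]⟩).continuousAt.continuousWithinAt)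
      (fun x hx => hF x ⟨by linarith [hx.1], by linarith [hx.2]⟩)
    refine ⟨ξ, ⟨by linarith [hξ.1], by linarith [hξ.2]⟩, ?_, ?_⟩
    · rw [abs_of_neg hξ.2, abs_of_neg h]; linarith [hξ.1]
    · rw [eq_div_iff (by linarith)] at e; linarith
  · subst h
    exact ⟨0, ⟨h1, h2⟩, le_refl _, by simp⟩
  · obtain ⟨ξ, hξ, e⟩ := exists_hasDerivAt_eq_slope F F' h
      (fun x hx => (hF x ⟨by linarith [hx.1], by linarith [hx.2]⟩).continuousAt.continuousWithinAt)
      (fun x hx => hF x ⟨by linarith [hx.1], by linarith [hx.2]⟩)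
    refine ⟨ξ, ⟨by linarith [hξ.1], by linarith [hξ.2]⟩, ?_, ?_⟩
    · rw [abs_of_pos hξ.1, abs_of_pos h]; linarith [hξ.2]
    · rw [eq_div_iff (by linarith)] at e; linarith

lemma taylor_aux (am ap : ℝ) (ham : am < 0) (hap : 0 < ap) (F F' F'' : ℝ → ℝ) (hF0 : F 0 = 0)
    (hF : ∀ y ∈ Icc am ap, HasDerivAt F (F' y) y)
    (hF' : ∀ y ∈ Icc am ap, HasDerivAt F' (F'' y) y)
    (hc : ContinuousOn F'' (Icc am ap)) :
    ∃ L, 0 ≤ L ∧ ∀ y ∈ Icc am ap, |F' y - F' 0| ≤ L * |y| ∧ |F y - F' 0 * y| ≤ L * y ^ 2 := by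
  obtain ⟨L, hL⟩ := isCompact_Icc.exists_bound_of_continuousOn hc
  have hL0 : 0 ≤ L := (norm_nonneg _).trans (hL 0 ⟨ham.le, hap.le⟩)
  have key : ∀ y ∈ Icc am ap, |F' y - F' 0| ≤ L * |y| := by
    intro y hy
    obtain ⟨ξ, hξ, -, e⟩ := mv_aux am ap ham hap F' F'' hF' y hy
    rw [e, abs_mul]
    exact mul_le_mul_of_nonneg_right (hL ξ hξ) (abs_nonneg _)
  refine ⟨L, hL0, fun y hy => ⟨key y hy, ?_⟩⟩
  obtain ⟨ξ, hξ, hle, e⟩ := mv_aux am ap ham hap F F' hF y hy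
  have : F y - F' 0 * y = (F' ξ - F' 0) * y := by linarith
  rw [this, abs_mul, ← sq_abs y, pow_two, ← mul_assoc]
  exact mul_le_mul_of_nonneg_right
    ((key ξ hξ).trans (mul_le_mul_of_nonneg_left hle hL0)) (abs_nonneg _)

lemma alg_aux (K L y Fy Gy F1 f g : ℝ) (hK : 0 ≤ K) (hL : 0 ≤ L)
    (hf : |f| ≤ K) (hg : |g| ≤ K) (hFy : |Fy| ≤ K * |y|) (hGy : |Gy| ≤ K * |y|)
    (h1 : |F1 - f| ≤ L * |y|) (h2 : |Fy - f * y| ≤ L * y ^ 2) (h3 : |Gy - g * y| ≤ L * y ^ 2) :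
    |F1 * (Gy - Fy) - (g - f) * Fy| ≤ 4 * K * L * y ^ 2 := by
  have e : F1 * (Gy - Fy) - (g - f) * Fy
      = (F1 - f) * (Gy - Fy) + f * (Gy - g * y) - g * (Fy - f * y) := by ring
  have a1 : |(F1 - f) * (Gy - Fy)| ≤ (L * |y|) * (K * |y| + K * |y|) := by
    rw [abs_mul]
    exact mul_le_mul h1 ((abs_sub _ _).trans (add_le_add hGy hFy)) (abs_nonneg _) (by positivity)
  have a2 : |f * (Gy - g * y)| ≤ K * (L * y ^ 2) := by
    rw [abs_mul]; exact mul_le_mul hf h3 (abs_nonneg _) hK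
  have a3 : |g * (Fy - f * y)| ≤ K * (L * y ^ 2) := by
    rw [abs_mul]; exact mul_le_mul hg h2 (abs_nonneg _) hK
  have a4 : (L * |y|) * (K * |y| + K * |y|) = 2 * K * L * y ^ 2 := by rw [← sq_abs y]; ring
  rw [e]
  rw [a4] at a1
  rw [abs_le] at *
  constructor <;> linarith [a1.1, a1.2, a2.1, a2.2, a3.1, a3.2]

/-- Comparison of the symbols `σ₊` and `σ₋`: for `C²` profiles,
`|σ₊(c) − σ₋(c)| ≤ C|c||σ₋(c)|`, i.e. `|σ₊(c)/σ₋(c) − 1| ≤ C|c|`. -/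
theorem sigma_ratio_close_to_one (am ap κ K : ℝ) (ham : am < 0) (hap : 0 < ap)
    (hκ : 0 < κ) (hκK : κ ≤ K)
    (Wp Wm Wp' Wm' Wp'' Wm'' : ℝ → ℝ)
    (hWp0 : Wp 0 = 0) (hWm0 : Wm 0 = 0)
    (hWp : ∀ y ∈ Icc am ap, HasDerivAt Wp (Wp' y) y)
    (hWm : ∀ y ∈ Icc am ap, HasDerivAt Wm (Wm' y) y)
    (hWp' : ∀ y ∈ Icc am ap, HasDerivAt Wp' (Wp'' y) y)
    (hWm' : ∀ y ∈ Icc am ap, HasDerivAt Wm' (Wm'' y) y)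
    (hWp''c : ContinuousOn Wp'' (Icc am ap)) (hWm''c : ContinuousOn Wm'' (Icc am ap))
    (hWp'b : ∀ y ∈ Icc am ap, Wp' y ∈ Icc κ K)
    (hWm'b : ∀ y ∈ Icc am ap, Wm' y ∈ Icc (-K) (-κ))
    (ycp ycm : ℝ → ℝ)
    (hycp : ∀ c ∈ Icc (max (Wm ap) (Wp am)) (min (Wp ap) (Wm am)),
      ycp c ∈ Icc (0:ℝ) ap ∧ (0 ≤ c → Wp (ycp c) = c) ∧ (c ≤ 0 → Wm (ycp c) = c))
    (hycm : ∀ c ∈ Icc (max (Wm ap) (Wp am)) (min (Wp ap) (Wm am)),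
      ycm c ∈ Icc am (0:ℝ) ∧ (0 ≤ c → Wm (ycm c) = c) ∧ (c ≤ 0 → Wp (ycm c) = c)) :
    ∃ C > 0, ∀ c ∈ Icc (max (Wm ap) (Wp am)) (min (Wp ap) (Wm am)),
      |(Wp' (ycp c) * (Wm (ycp c) - c) - Wm' (ycp c) * (Wp (ycp c) - c))
          - (Wp' (ycm c) * (Wm (ycm c) - c) - Wm' (ycm c) * (Wp (ycm c) - c))| ≤
        C * |c| * |Wp' (ycm c) * (Wm (ycm c) - c) - Wm' (ycm c) * (Wp (ycm c) - c)| := by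
  obtain ⟨L1, hL1, T1⟩ := taylor_aux am ap ham hap Wp Wp' Wp'' hWp0 hWp hWp' hWp''c
  obtain ⟨L2, hL2, T2⟩ := taylor_aux am ap ham hap Wm Wm' Wm'' hWm0 hWm hWm' hWm''c
  have hK : 0 < K := lt_of_lt_of_le hκ hκK
  have z : (0:ℝ) ∈ Icc am ap := ⟨ham.le, hap.le⟩
  have bp : ∀ y ∈ Icc am ap, κ ≤ |Wp' y| ∧ |Wp' y| ≤ K := by
    intro y hy
    have := hWp'b y hy
    rw [abs_of_pos (by linarith [this.1])]; exact this
  have bm : ∀ y ∈ Icc am ap, κ ≤ |Wm' y| ∧ |Wm' y| ≤ K := by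
    intro y hy
    have := hWm'b y hy
    rw [abs_of_neg (by linarith [this.2])]; constructor <;> linarith [this.1, this.2]
  have sp : ∀ y ∈ Icc am ap, κ * |y| ≤ |Wp y| ∧ |Wp y| ≤ K * |y| := by
    intro y hy
    obtain ⟨ξ, hξ, -, e⟩ := mv_aux am ap ham hap Wp Wp' hWp y hy
    rw [hWp0, sub_zero] at e
    rw [e, abs_mul]
    exact ⟨mul_le_mul_of_nonneg_right (bp ξ hξ).1 (abs_nonneg _),
      mul_le_mul_of_nonneg_right (bp ξ hξ).2 (abs_nonneg _)⟩
  have sm : ∀ y ∈ Icc am ap, κ * |y| ≤ |Wm y| ∧ |Wm y| ≤ K * |y| := by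
    intro y hy
    obtain ⟨ξ, hξ, -, e⟩ := mv_aux am ap ham hap Wm Wm' hWm y hy
    rw [hWm0, sub_zero] at e
    rw [e, abs_mul]
    exact ⟨mul_le_mul_of_nonneg_right (bm ξ hξ).1 (abs_nonneg _),
      mul_le_mul_of_nonneg_right (bm ξ hξ).2 (abs_nonneg _)⟩
  have up : ∀ y ∈ Icc am ap, |Wp' y - Wp' 0| ≤ (L1 + L2) * |y| ∧
      |Wp y - Wp' 0 * y| ≤ (L1 + L2) * y ^ 2 := fun y hy =>
    ⟨(T1 y hy).1.trans (mul_le_mul_of_nonneg_right (by linarith) (abs_nonneg _)),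
     (T1 y hy).2.trans (mul_le_mul_of_nonneg_right (by linarith) (sq_nonneg _))⟩
  have um : ∀ y ∈ Icc am ap, |Wm' y - Wm' 0| ≤ (L1 + L2) * |y| ∧
      |Wm y - Wm' 0 * y| ≤ (L1 + L2) * y ^ 2 := fun y hy =>
    ⟨(T2 y hy).1.trans (mul_le_mul_of_nonneg_right (by linarith) (abs_nonneg _)),
     (T2 y hy).2.trans (mul_le_mul_of_nonneg_right (by linarith) (sq_nonneg _))⟩
  have hL : 0 ≤ L1 + L2 := by linarith
  generalize L1 + L2 = L at up um hL
  have main : ∀ c, ∀ y ∈ Icc am ap, (Wp y = c ∨ Wm y = c) →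
      |(Wp' y * (Wm y - c) - Wm' y * (Wp y - c)) - (Wm' 0 - Wp' 0) * c|
        ≤ 4 * K * L / κ ^ 2 * c ^ 2 := by
    intro c y hy h
    have hyc : κ * |y| ≤ |c| := by
      rcases h with h | h
      · rw [← h]; exact (sp y hy).1
      · rw [← h]; exact (sm y hy).1
    have hyc2 : y ^ 2 ≤ c ^ 2 / κ ^ 2 := by
      rw [le_div_iff₀ (by positivity), ← sq_abs y, ← sq_abs c]
      calc |y| ^ 2 * κ ^ 2 = (κ * |y|) ^ 2 := by ring
        _ ≤ |c| ^ 2 := pow_le_pow_left₀ (by positivity) hyc 2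
    have fin : 4 * K * L * y ^ 2 ≤ 4 * K * L / κ ^ 2 * c ^ 2 := by
      calc 4 * K * L * y ^ 2 ≤ 4 * K * L * (c ^ 2 / κ ^ 2) :=
            mul_le_mul_of_nonneg_left hyc2 (by positivity)
        _ = _ := by ring
    refine le_trans ?_ fin
    rcases h with h | h
    · have := alg_aux K L y (Wp y) (Wm y) (Wp' y) (Wp' 0) (Wm' 0) hK.le hL (bp 0 z).2 (bm 0 z).2
        (sp y hy).2 (sm y hy).2 (up y hy).1 (up y hy).2 (um y hy).2
      rw [← h]
      refine le_of_eq_of_le (congrArg abs ?_) this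
      ring
    · have := alg_aux K L y (Wm y) (Wp y) (Wm' y) (Wm' 0) (Wp' 0) hK.le hL (bm 0 z).2 (bp 0 z).2
        (sm y hy).2 (sp y hy).2 (um y hy).1 (um y hy).2 (up y hy).2
      rw [← h, ← abs_neg]
      refine le_of_eq_of_le (congrArg abs ?_) this
      ring
  refine ⟨8 * K * L / κ ^ 3 + 1, by positivity, fun c hc => ?_⟩
  obtain ⟨hp, hp1, hp2⟩ := hycp c hc
  obtain ⟨hm, hm1, hm2⟩ := hycm c hc
  have hp' : ycp c ∈ Icc am ap := ⟨by linarith [hp.1], hp.2⟩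
  have hm' : ycm c ∈ Icc am ap := ⟨hm.1, by linarith [hm.2]⟩
  have A := main c _ hp' (by rcases le_total 0 c with h | h <;> tauto)
  have B := main c _ hm' (by rcases le_total 0 c with h | h <;> tauto)
  have low : κ * |c| ≤ |Wp' (ycm c) * (Wm (ycm c) - c) - Wm' (ycm c) * (Wp (ycm c) - c)| := by
    rcases le_total 0 c with h | h
    · obtain ⟨ξ, hξ, -, e⟩ := mv_aux am ap ham hap Wp Wp' hWp _ hm'
      have : Wp (ycm c) ≤ 0 := by
        have := mul_nonpos_of_nonneg_of_nonpos (hκ.le.trans (hWp'b ξ hξ).1) hm.2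
        linarith
      rw [hm1 h, sub_self, mul_zero, zero_sub, abs_neg, abs_mul]
      refine mul_le_mul (bm _ hm').1 ?_ (abs_nonneg _) (abs_nonneg _)
      rw [abs_of_nonneg h, abs_of_nonpos (by linarith)]; linarith
    · obtain ⟨ξ, hξ, -, e⟩ := mv_aux am ap ham hap Wm Wm' hWm _ hm'
      have : 0 ≤ Wm (ycm c) := by
        have := mul_nonneg_of_nonpos_of_nonpos (a := Wm' ξ) (by linarith [(hWm'b ξ hξ).2]) hm.2
        linarith
      rw [hm2 h, sub_self, mul_zero, sub_zero, abs_mul]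
      refine mul_le_mul (bp _ hm').1 ?_ (abs_nonneg _) (abs_nonneg _)
      rw [abs_of_nonpos h, abs_of_nonneg (by linarith)]; linarith
  generalize Wp' (ycm c) * (Wm (ycm c) - c) - Wm' (ycm c) * (Wp (ycm c) - c) = σm at *
  generalize Wp' (ycp c) * (Wm (ycp c) - c) - Wm' (ycp c) * (Wp (ycp c) - c) = σp at *
  have S : |σp - σm| ≤ 8 * K * L / κ ^ 2 * c ^ 2 := by
    have e : 8 * K * L / κ ^ 2 * c ^ 2
      = 4 * K * L / κ ^ 2 * c ^ 2 + 4 * K * L / κ ^ 2 * c ^ 2 := by ring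
    rw [e]
    rw [abs_le] at A B ⊢
    constructor <;> linarith [A.1, A.2, B.1, B.2]
  calc |σp - σm| ≤ 8 * K * L / κ ^ 2 * c ^ 2 := S
    _ = 8 * K * L / κ ^ 3 * |c| * (κ * |c|) := by
      rw [← sq_abs c]; field_simp
    _ ≤ 8 * K * L / κ ^ 3 * |c| * |σm| := mul_le_mul_of_nonneg_left low (by positivity)
    _ ≤ (8 * K * L / κ ^ 3 + 1) * |c| * |σm| := by
      gcongr; linarith
end

section
/- For every c ∈ ℂ with Im c ≠ 0, one has ∫₀¹ ( W₊'(y)/(W₊(y) − c) − W₋'(y)/(W₋(y) − c) ) dy = Log( (W₊(1) − c)/(W₋(1) − c) ), where Log denotes the principal branch of the complex logarithm. -/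
open Set

/-- The explicit logarithmic integral: for nonreal `c`,
`∫₀¹ (W₊'/(W₊−c) − W₋'/(W₋−c)) dy = Log((W₊(1)−c)/(W₋(1)−c))` (principal branch). -/
theorem log_integral_identity (Wp Wm Wp' Wm' : ℝ → ℝ)
    (hWp0 : Wp 0 = 0) (hWm0 : Wm 0 = 0)
    (hWp : ∀ y ∈ Icc (0:ℝ) 1, HasDerivAt Wp (Wp' y) y)
    (hWm : ∀ y ∈ Icc (0:ℝ) 1, HasDerivAt Wm (Wm' y) y)
    (hWp'c : ContinuousOn Wp' (Icc (0:ℝ) 1)) (hWm'c : ContinuousOn Wm' (Icc (0:ℝ) 1))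
    (hWp'pos : ∀ y ∈ Icc (0:ℝ) 1, 0 < Wp' y)
    (hWm'neg : ∀ y ∈ Icc (0:ℝ) 1, Wm' y < 0)
    (c : ℂ) (hc : c.im ≠ 0) :
    (∫ y in (0:ℝ)..1,
        ((Wp' y : ℂ) / ((Wp y : ℂ) - c) - (Wm' y : ℂ) / ((Wm y : ℂ) - c)))
      = Complex.log (((Wp 1 : ℂ) - c) / ((Wm 1 : ℂ) - c)) := by
  have hne : ∀ x : ℝ, (x : ℂ) - c ≠ 0 := by
    intro x h
    have := congrArg Complex.im h
    simp at this
    exact hc this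
  have hslit : ∀ p m : ℝ, ((p : ℂ) - c) / ((m : ℂ) - c) ∈ Complex.slitPlane := by
    intro p m
    obtain ⟨z, hz⟩ : ∃ z, z = ((p : ℂ) - c) / ((m : ℂ) - c) := ⟨_, rfl⟩
    rw [← hz]
    rw [eq_div_iff (hne m)] at hz
    rw [Complex.mem_slitPlane_iff]
    by_cases h : z.im = 0
    · left
      have h2 := congrArg Complex.im hz
      simp [h] at h2
      have h3 : z.re = 1 := by
        apply mul_right_cancel₀ hc
        linarith
      rw [h3]
      exact one_pos
    · right
      exact h
  have key : ∀ y ∈ uIcc (0:ℝ) 1,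
      HasDerivAt (fun y : ℝ => Complex.log (((Wp y : ℂ) - c) / ((Wm y : ℂ) - c)))
        ((Wp' y : ℂ) / ((Wp y : ℂ) - c) - (Wm' y : ℂ) / ((Wm y : ℂ) - c)) y := by
    intro y hy
    rw [uIcc_of_le zero_le_one] at hy
    have h1 := ((hWp y hy).ofReal_comp).sub_const c
    have h2 := ((hWm y hy).ofReal_comp).sub_const c
    have h3 := (h1.fun_div h2 (hne _)).clog_real (hslit _ _)
    convert h3 using 1
    have := hne (Wp y)
    have := hne (Wm y)
    field_simp
  have cp : ContinuousOn Wp (Icc (0:ℝ) 1) := fun y hy => (hWp y hy).continuousAt.continuousWithinAt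
  have cm : ContinuousOn Wm (Icc (0:ℝ) 1) := fun y hy => (hWm y hy).continuousAt.continuousWithinAt
  have hofr : ∀ f : ℝ → ℝ, ContinuousOn f (Icc (0:ℝ) 1) →
      ContinuousOn (fun y => (f y : ℂ)) (Icc (0:ℝ) 1) :=
    fun f hf => Complex.continuous_ofReal.comp_continuousOn hf
  rw [intervalIntegral.integral_eq_sub_of_hasDerivAt key]
  · simp [hWp0, hWm0, div_self (neg_ne_zero.mpr (show c ≠ 0 by rintro rfl; simp at hc)),
      div_self (show c ≠ 0 by rintro rfl; simp at hc)]
  · apply ContinuousOn.intervalIntegrable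
    rw [uIcc_of_le zero_le_one]
    exact ((hofr _ hWp'c).div ((hofr _ cp).sub continuousOn_const) (fun y _ => hne _)).sub
      ((hofr _ hWm'c).div ((hofr _ cm).sub continuousOn_const) (fun y _ => hne _))
end

section
/- For every real c with W₋(1) < c < W₊(1), the limit as ε → 0⁺ of ∫₀¹ ( W₊'(y)/(W₊(y) − c − iε) − W₋'(y)/(W₋(y) − c − iε) ) dy exists and equals ln( (W₊(1) − c)/(c − W₋(1)) ) + iπ. -/
open Set Filter Topology

theorem aux_ftc (W W' : ℝ → ℝ)
    (hW : ∀ y ∈ Icc (0:ℝ) 1, HasDerivAt W (W' y) y)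
    (hc : ContinuousOn W' (Icc (0:ℝ) 1)) (c ε : ℝ) (hε : 0 < ε) :
    IntervalIntegrable (fun y => (W' y : ℂ) / ((W y : ℂ) - (c:ℂ) - (ε:ℂ) * Complex.I))
      MeasureTheory.volume 0 1 ∧
    ∫ y in (0:ℝ)..1, (W' y : ℂ) / ((W y : ℂ) - (c:ℂ) - (ε:ℂ) * Complex.I)
      = Complex.log ((W 1 : ℂ) - (c:ℂ) - (ε:ℂ) * Complex.I)
        - Complex.log ((W 0 : ℂ) - (c:ℂ) - (ε:ℂ) * Complex.I) := by
  have hI : uIcc (0:ℝ) 1 = Icc 0 1 := uIcc_of_le zero_le_one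
  have him : ∀ y, ((W y : ℂ) - (c:ℂ) - (ε:ℂ) * Complex.I).im = -ε := by
    intro y; simp
  have hne : ∀ y, ((W y : ℂ) - (c:ℂ) - (ε:ℂ) * Complex.I) ≠ 0 := by
    intro y h
    have := him y
    rw [h] at this
    simp at this
    linarith
  have hWc : ContinuousOn W (Icc (0:ℝ) 1) := fun y hy => (hW y hy).continuousAt.continuousWithinAt
  have hint : IntervalIntegrable (fun y => (W' y : ℂ) / ((W y : ℂ) - (c:ℂ) - (ε:ℂ) * Complex.I))
      MeasureTheory.volume 0 1 := by
    apply ContinuousOn.intervalIntegrable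
    rw [hI]
    apply ContinuousOn.div
    · exact Complex.continuous_ofReal.comp_continuousOn hc
    · exact ((Complex.continuous_ofReal.comp_continuousOn hWc).sub continuousOn_const).sub
        continuousOn_const
    · intro y _; exact hne y
  refine ⟨hint, ?_⟩
  refine intervalIntegral.integral_eq_sub_of_hasDerivAt
    (f := fun y => Complex.log ((W y : ℂ) - (c:ℂ) - (ε:ℂ) * Complex.I)) ?_ hint
  intro y hy
  rw [hI] at hy
  have h1 : HasDerivAt (fun y => (W y : ℂ) - (c:ℂ) - (ε:ℂ) * Complex.I) (W' y : ℂ) y :=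
    ((hW y hy).ofReal_comp.sub_const _).sub_const _
  refine h1.clog_real ?_
  right
  rw [him y]
  linarith

/-- The Sokhotski–Plemelj type jump computation: for `W₋(1) < c < W₊(1)`,
`∫₀¹ (W₊'/(W₊−c−iε) − W₋'/(W₋−c−iε)) dy → ln((W₊(1)−c)/(c−W₋(1))) + iπ` as `ε → 0⁺`. -/
theorem log_integral_jump (Wp Wm Wp' Wm' : ℝ → ℝ)
    (hWp0 : Wp 0 = 0) (hWm0 : Wm 0 = 0)
    (hWp : ∀ y ∈ Icc (0:ℝ) 1, HasDerivAt Wp (Wp' y) y)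
    (hWm : ∀ y ∈ Icc (0:ℝ) 1, HasDerivAt Wm (Wm' y) y)
    (hWp'c : ContinuousOn Wp' (Icc (0:ℝ) 1)) (hWm'c : ContinuousOn Wm' (Icc (0:ℝ) 1))
    (hWp'pos : ∀ y ∈ Icc (0:ℝ) 1, 0 < Wp' y)
    (hWm'neg : ∀ y ∈ Icc (0:ℝ) 1, Wm' y < 0)
    (c : ℝ) (hc₁ : Wm 1 < c) (hc₂ : c < Wp 1) :
    Tendsto
      (fun ε : ℝ => ∫ y in (0:ℝ)..1,
        ((Wp' y : ℂ) / ((Wp y : ℂ) - (c:ℂ) - (ε:ℂ) * Complex.I)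
          - (Wm' y : ℂ) / ((Wm y : ℂ) - (c:ℂ) - (ε:ℂ) * Complex.I)))
      (𝓝[>] (0:ℝ))
      (𝓝 ((Real.log ((Wp 1 - c) / (c - Wm 1)) : ℂ) + (Real.pi : ℂ) * Complex.I)) := by
  have hcont : ∀ a : ℝ, Tendsto (fun ε : ℝ => (a:ℂ) - (c:ℂ) - (ε:ℂ) * Complex.I) (𝓝[>] (0:ℝ))
      (𝓝 ((a - c : ℝ) : ℂ)) := by
    intro a
    have : Continuous (fun ε : ℝ => (a:ℂ) - (c:ℂ) - (ε:ℂ) * Complex.I) := by fun_prop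
    have h := this.tendsto 0
    simp only [Complex.ofReal_zero, zero_mul, sub_zero] at h
    rw [Complex.ofReal_sub]
    exact h.mono_left nhdsWithin_le_nhds
  have hp : Tendsto (fun ε : ℝ => Complex.log ((Wp 1:ℂ) - (c:ℂ) - (ε:ℂ) * Complex.I)) (𝓝[>] (0:ℝ))
      (𝓝 (Real.log (Wp 1 - c) : ℂ)) := by
    rw [Complex.ofReal_log (by linarith)]
    refine (hcont (Wp 1)).clog ?_
    left
    rw [Complex.ofReal_re]
    linarith
  have hm : Tendsto (fun ε : ℝ => Complex.log ((Wm 1:ℂ) - (c:ℂ) - (ε:ℂ) * Complex.I)) (𝓝[>] (0:ℝ))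
      (𝓝 ((Real.log (c - Wm 1) : ℂ) - Real.pi * Complex.I)) := by
    have h := Complex.tendsto_log_nhdsWithin_im_neg_of_re_neg_of_im_zero
      (z := ((Wm 1 - c : ℝ) : ℂ)) (by rw [Complex.ofReal_re]; linarith) (Complex.ofReal_im _)
    have e : ‖((Wm 1 - c : ℝ) : ℂ)‖ = c - Wm 1 := by
      rw [Complex.norm_real, Real.norm_eq_abs, abs_of_neg (by linarith)]; ring
    rw [e] at h
    refine h.comp (tendsto_nhdsWithin_iff.2 ⟨hcont (Wm 1), ?_⟩)
    filter_upwards [self_mem_nhdsWithin] with ε hε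
    have : (0:ℝ) < ε := hε
    simpa using this
  have hfin := hp.sub hm
  have e : (Real.log (Wp 1 - c) : ℂ) - ((Real.log (c - Wm 1) : ℂ) - Real.pi * Complex.I)
      = (Real.log ((Wp 1 - c) / (c - Wm 1)) : ℂ) + (Real.pi : ℂ) * Complex.I := by
    rw [Real.log_div (by linarith) (by linarith)]
    push_cast
    ring
  rw [e] at hfin
  refine hfin.congr' ?_
  filter_upwards [self_mem_nhdsWithin] with ε hε
  obtain ⟨i1, e1⟩ := aux_ftc Wp Wp' hWp hWp'c c ε hε
  obtain ⟨i2, e2⟩ := aux_ftc Wm Wm' hWm hWm'c c ε hε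
  rw [intervalIntegral.integral_sub i1 i2, e1, e2, hWp0, hWm0]
  ring
end

section
/- Let p, a, b, I₊, I₋, s₊, s₋ be real numbers with s₊ ≠ 0 and s₋ ≠ 0. Then ( p·I₊·I₋ − π²p/(s₊s₋) − a·I₊ − b·I₋ )² + ( πp·I₊/s₋ + πp·I₋/s₊ − πa/s₊ − πb/s₋ )² = ( p·I₊·I₋ − a·I₊ − b·I₋ )² + (π/s₋)²·( p·I₊ − b )² + (π/s₊)²·( p·I₋ − a )² + π⁴p²/(s₊s₋)² + 2π²ab/(s₊s₋). In particular, if s₊s₋ > 0 and a > 0, b > 0, then the left-hand side is at least 2π²ab/(s₊s₋) > 0. -/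
open Real

/-- The algebraic identity underlying the positivity of the boundary value of the
Wronskian `𝒟`: with `p = c²P(c)`, `a = φ₊(0,c)²`, `b = φ₋(0,c)²`, `I± = I±^{re}(c)`,
`s± = σ±(c)`, the squared modulus `𝒟^{re}(c)² + 𝒟^{im}(c)²` recombines into a sum of
squares plus `π⁴p²/(s₊s₋)² + 2π²ab/(s₊s₋)`; in particular it is strictly positive when
`s₊s₋ > 0` and `a, b > 0`. -/
theorem wronskian_modulus_identity (p a b Ip Im sp sm : ℝ)
    (hsp : sp ≠ 0) (hsm : sm ≠ 0) :
    ((p * Ip * Im - π ^ 2 * p / (sp * sm) - a * Ip - b * Im) ^ 2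
        + (π * p * Ip / sm + π * p * Im / sp - π * a / sp - π * b / sm) ^ 2
      = (p * Ip * Im - a * Ip - b * Im) ^ 2
        + (π / sm) ^ 2 * (p * Ip - b) ^ 2 + (π / sp) ^ 2 * (p * Im - a) ^ 2
        + π ^ 4 * p ^ 2 / (sp * sm) ^ 2 + 2 * π ^ 2 * a * b / (sp * sm)) ∧
    (0 < sp * sm → 0 < a → 0 < b →
      2 * π ^ 2 * a * b / (sp * sm) ≤
          (p * Ip * Im - π ^ 2 * p / (sp * sm) - a * Ip - b * Im) ^ 2
            + (π * p * Ip / sm + π * p * Im / sp - π * a / sp - π * b / sm) ^ 2 ∧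
        0 < 2 * π ^ 2 * a * b / (sp * sm)) := by
  have key : (p * Ip * Im - π ^ 2 * p / (sp * sm) - a * Ip - b * Im) ^ 2
        + (π * p * Ip / sm + π * p * Im / sp - π * a / sp - π * b / sm) ^ 2
      = (p * Ip * Im - a * Ip - b * Im) ^ 2
        + (π / sm) ^ 2 * (p * Ip - b) ^ 2 + (π / sp) ^ 2 * (p * Im - a) ^ 2
        + π ^ 4 * p ^ 2 / (sp * sm) ^ 2 + 2 * π ^ 2 * a * b / (sp * sm) := by
    field_simp
    ring
  refine ⟨key, fun hs ha hb => ⟨?_, ?_⟩⟩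
  · rw [key]
    have h : 0 ≤ (p * Ip * Im - a * Ip - b * Im) ^ 2
        + (π / sm) ^ 2 * (p * Ip - b) ^ 2 + (π / sp) ^ 2 * (p * Im - a) ^ 2
        + π ^ 4 * p ^ 2 / (sp * sm) ^ 2 := by positivity
    linarith
  · have := Real.pi_pos
    exact div_pos (by positivity) hs
end

section
/- Let u, b : ℝ → ℝ be continuous on [−1,1] with |u(y)| ≤ |b(y)| for all y ∈ [−1,1], let α ∈ ℝ, let c ∈ ℂ with Im c ≠ 0, set H(y) := (u(y) + b(y) − c)(u(y) − b(y) − c), and let F : [−1,1] → ℂ. If Θ₁ and Θ₂ are both continuously differentiable functions from [−1,1] to ℂ such that y ↦ H(y)·Θᵢ'(y) is differentiable on [−1,1] with (HΘᵢ')'(y) − α²H(y)Θᵢ(y) = F(y) for all y ∈ [−1,1], and Θᵢ(−1) = Θᵢ(1) = 0 for i = 1, 2, then Θ₁(y) = Θ₂(y) for all y ∈ [−1,1]. -/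
open Set

/-- Uniqueness for the inhomogeneous Sturmian boundary value problem
`∂_y(ℋ ∂_yΘ) − α²ℋΘ = F`, `Θ(±1) = 0`, with `ℋ(y) = (u+b−c)(u−b−c)` and nonreal
spectral parameter `c`, under the Stern stability condition `|u| ≤ |b|`. -/
theorem inhomogeneous_sturmian_unique (u b : ℝ → ℝ)
    (hu : ContinuousOn u (Icc (-1:ℝ) 1)) (hb : ContinuousOn b (Icc (-1:ℝ) 1))
    (hss : ∀ y ∈ Icc (-1:ℝ) 1, |u y| ≤ |b y|)
    (α : ℝ) (c : ℂ) (hc : c.im ≠ 0)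
    (F : ℝ → ℂ) (Θ₁ Θ₂ : ℝ → ℂ)
    (hΘ₁diff : ∀ y ∈ Icc (-1:ℝ) 1, DifferentiableAt ℝ Θ₁ y)
    (hΘ₁'cont : ContinuousOn (deriv Θ₁) (Icc (-1:ℝ) 1))
    (hΘ₂diff : ∀ y ∈ Icc (-1:ℝ) 1, DifferentiableAt ℝ Θ₂ y)
    (hΘ₂'cont : ContinuousOn (deriv Θ₂) (Icc (-1:ℝ) 1))
    (hode₁ : ∀ y ∈ Icc (-1:ℝ) 1,
      HasDerivAt
        (fun z => (((u z + b z : ℝ) : ℂ) - c) * (((u z - b z : ℝ) : ℂ) - c) * deriv Θ₁ z)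
        ((α : ℂ) ^ 2 * ((((u y + b y : ℝ) : ℂ) - c) * (((u y - b y : ℝ) : ℂ) - c)) * Θ₁ y
          + F y) y)
    (hode₂ : ∀ y ∈ Icc (-1:ℝ) 1,
      HasDerivAt
        (fun z => (((u z + b z : ℝ) : ℂ) - c) * (((u z - b z : ℝ) : ℂ) - c) * deriv Θ₂ z)
        ((α : ℂ) ^ 2 * ((((u y + b y : ℝ) : ℂ) - c) * (((u y - b y : ℝ) : ℂ) - c)) * Θ₂ y
          + F y) y)
    (hbc₁ : Θ₁ (-1) = 0 ∧ Θ₁ 1 = 0) (hbc₂ : Θ₂ (-1) = 0 ∧ Θ₂ 1 = 0) :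
    ∀ y ∈ Icc (-1:ℝ) 1, Θ₁ y = Θ₂ y := by
  
  have hc2 : 0 < c.im ^ 2 := by positivity
  set H : ℝ → ℂ := fun z => (((u z + b z : ℝ) : ℂ) - c) * (((u z - b z : ℝ) : ℂ) - c) with hH
  set T : ℝ → ℂ := fun z => Θ₁ z - Θ₂ z with hT
  set D : ℝ → ℂ := fun z => deriv Θ₁ z - deriv Θ₂ z with hD
  set w : ℂ := ⟨1, c.re / c.im⟩ with hw
  have hTd : ∀ y ∈ Icc (-1:ℝ) 1, HasDerivAt T (D y) y := fun y hy =>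
    (hΘ₁diff y hy).hasDerivAt.sub (hΘ₂diff y hy).hasDerivAt
  have hHD : ∀ y ∈ Icc (-1:ℝ) 1,
      HasDerivAt (fun z => H z * D z) ((α : ℂ) ^ 2 * H y * T y) y := by
    intro y hy
    have h0 := (hode₁ y hy).sub (hode₂ y hy)
    refine (h0.congr_deriv ?_).congr_of_eventuallyEq (Filter.Eventually.of_forall fun z => ?_)
    · simp only [hH, hT]
      ring
    · simp only [hH, hD, Pi.sub_apply]
      ring
  set g : ℝ → ℝ := fun z => (w * ((H z * D z) * star (T z))).re with hg
  have hgd : ∀ y ∈ Icc (-1:ℝ) 1, HasDerivAt g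
      ((w * (((α : ℂ) ^ 2 * H y * T y) * star (T y) + (H y * D y) * star (D y))).re) y := by
    intro y hy
    have h1 := (((hHD y hy).mul (hTd y hy).star).const_mul w)
    exact Complex.reCLM.hasFDerivAt.comp_hasDerivAt y h1
  have hval : ∀ y, (w * (((α : ℂ) ^ 2 * H y * T y) * star (T y) + (H y * D y) * star (D y))).re
      = (u y ^ 2 - b y ^ 2 - c.re ^ 2 - c.im ^ 2) *
        (α ^ 2 * ((T y).re ^ 2 + (T y).im ^ 2) + ((D y).re ^ 2 + (D y).im ^ 2)) := by
    intro y
    have e : w * (((α : ℂ) ^ 2 * H y * T y) * star (T y) + (H y * D y) * star (D y))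
      = (w * H y) * ((α ^ 2 * ((T y).re ^ 2 + (T y).im ^ 2)
          + ((D y).re ^ 2 + (D y).im ^ 2) : ℝ) : ℂ) := by
      have a1 := Complex.mul_conj (T y)
      have a2 := Complex.mul_conj (D y)
      rw [Complex.normSq_apply] at a1 a2
      push_cast at a1 a2 ⊢
      simp only [← Complex.star_def] at a1 a2
      linear_combination (w * H y * (α : ℂ) ^ 2) * a1 + (w * H y) * a2
    rw [e, Complex.re_mul_ofReal]
    congr 1
    simp only [hw, hH, Complex.mul_re, Complex.mul_im, Complex.sub_re, Complex.sub_im,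
      Complex.ofReal_re, Complex.ofReal_im]
    field_simp
    ring
  have hneg : ∀ y ∈ Icc (-1:ℝ) 1, u y ^ 2 - b y ^ 2 - c.re ^ 2 - c.im ^ 2 < 0 := by
    intro y hy
    have := sq_le_sq.mpr (hss y hy)
    nlinarith [sq_nonneg c.re]
  have hanti : AntitoneOn g (Icc (-1:ℝ) 1) := by
    apply antitoneOn_of_deriv_nonpos (convex_Icc _ _)
    · exact fun y hy => (hgd y hy).continuousAt.continuousWithinAt
    · exact fun y hy => (hgd y (interior_subset hy)).differentiableAt.differentiableWithinAt
    · intro y hy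
      rw [(hgd y (interior_subset hy)).deriv, hval]
      exact mul_nonpos_of_nonpos_of_nonneg (hneg y (interior_subset hy)).le (by positivity)
  have hTm : T (-1) = 0 := by simp [hT, hbc₁.1, hbc₂.1]
  have hTp : T 1 = 0 := by simp [hT, hbc₁.2, hbc₂.2]
  have hg0 : ∀ y ∈ Icc (-1:ℝ) 1, g y = 0 := by
    intro y hy
    have h1 := hanti (left_mem_Icc.mpr (by norm_num)) hy hy.1
    have h2 := hanti hy (right_mem_Icc.mpr (by norm_num)) hy.2
    have h3 : g (-1) = 0 := by simp [hg, hTm]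
    have h4 : g 1 = 0 := by simp [hg, hTp]
    linarith
  have hD0 : ∀ y ∈ Ioo (-1:ℝ) 1, D y = 0 := by
    intro y hy
    have hy' := Ioo_subset_Icc_self hy
    have h1 : g =ᶠ[nhds y] fun _ => (0:ℝ) := by
      filter_upwards [Ioo_mem_nhds hy.1 hy.2] with z hz
      exact hg0 z (Ioo_subset_Icc_self hz)
    have h2 := (hgd y hy').unique ((hasDerivAt_const y (0:ℝ)).congr_of_eventuallyEq h1)
    rw [hval] at h2
    have h3 := (mul_eq_zero.mp h2).resolve_left (hneg y hy').ne
    have h4 : 0 ≤ α ^ 2 * ((T y).re ^ 2 + (T y).im ^ 2) := by positivity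
    apply Complex.ext
    · exact pow_eq_zero_iff (two_ne_zero) |>.mp
        (le_antisymm (by nlinarith [sq_nonneg (D y).im]) (sq_nonneg _))
    · exact pow_eq_zero_iff (two_ne_zero) |>.mp
        (le_antisymm (by nlinarith [sq_nonneg (D y).re]) (sq_nonneg _))
  have hDc : ∀ y ∈ Ico (-1:ℝ) 1, D y = 0 := by
    intro y hy
    have hcont : ContinuousOn D (Icc (-1:ℝ) 1) := hΘ₁'cont.sub hΘ₂'cont
    have hcl : EqOn D (fun _ => 0) (Icc (-1:ℝ) 1) :=
      EqOn.of_subset_closure (s := Ioo (-1:ℝ) 1) hD0 hcont continuousOn_const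
        Ioo_subset_Icc_self (by rw [closure_Ioo (by norm_num)])
    exact hcl (Ico_subset_Icc_self hy)
  intro y hy
  have := constant_of_has_deriv_right_zero (f := T) (a := -1) (b := 1)
    (fun z hz => (hTd z hz).continuousAt.continuousWithinAt)
    (fun z hz => by
      have := hTd z (Ico_subset_Icc_self hz)
      rw [hDc z hz] at this
      exact this.hasDerivWithinAt) y hy
  rw [hTm] at this
  exact sub_eq_zero.mp this
end
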